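/- For every a > 0 and every ε > 0 there exists a symplectic embedding of the open ball B^{2n+2}(a) into the trapezoid T^{2n+2}(a+ε) ⊂ ℝ^{2n+2}. -/

import Mathlib

/-!
The `2n` coordinates `x` are left untouched: the embedding is `(x, z) ↦ (x, g z)`, where `g` is an
injective area-preserving map of the disc of area `a` into `ℝ × [0,1]` with
`0 ≤ (g z)₁ ≤ π|z|² + ε` (`exists_planar`). If `π(|x|² + |z|²) < a`, then
`π|x|² < a - π|z|² ≤ (a + ε) - (g z)₁`, which is the condition defining the trapezoid.

A map satisfying these bounds would send circles to vertical segments if it could; since a circle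
is closed, it has to be cut along the negative axis, and the map must carry the neighbourhood of
the cut somewhere. To do this with explicit formulas, a half plane `{x ≥ -R}` containing the disc
is covered by curves open to the left (`fol b M`), one for each `m > -b`, each parametrised by
`t ∈ ℝ`: in polar coordinates about the focus `(shift M m, 0)`, with `t = tan (θ/2)`, the curve is
`π r² = m + b (1 + t²)`. For `m ≥ 0` the focus is the origin, and the curve is a near-circle of
area `m` which escapes to `x = -∞` inside a thin neighbourhood of the negative axis. For `m < 0`
the focus runs off to the left as `m` decreases to `-b`, and the curves fill what is left of that
neighbourhood. On the curve `m` the area density of `(m, t)` is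
`1 / (π (1 + t²)) + shift' M m · ∂y/∂t` (`fol_det`, `fol_det_pos`), the `t`-derivative of
`arctan t / π + shift' M m · y`. The curve is therefore sent to a vertical segment, at horizontal
position `m + L · shift M m + ε`, by this primitive divided by the speed `1 + L · shift' M m`
(`straight`). The two maps have equal Jacobian determinants, so `g = straight ∘ fol⁻¹` preserves
area (`exists_areaPreserving_deriv`).

For `m ≤ 0` the curves have `|y| ≤ 2β` where `b = β²` (`fol_snd_bound`), so that with `L = 4β` the
segments have length at most `1`; and with `β` small the total horizontal displacement
`L · shift` over the relevant region is smaller than `ε`. Injectivity of `fol` (`fol_injOn`) is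
polar coordinates for equal foci and a monotonicity computation at fixed height for distinct foci
(`fol_shift_eq`); that its image contains the half plane (`fol_surj`) is the intermediate value
theorem in `m`.
-/

open Set

noncomputable section

/-- `ℝ^{2m}`, written as pairs consisting of the `m` x-coordinates and the `m`
y-coordinates; for `m = n+1` the last pair of coordinates is the `(u,v)`-plane. -/
abbrev Esp (m : ℕ) : Type := (Fin m → ℝ) × (Fin m → ℝ)

/-- The standard symplectic form `ω₀ = Σ dxᵢ ∧ dyᵢ` (which is `ω₀ ⊕ du∧dv` on
`ℝ^{2n} × ℝ²`). -/
def omega0 {m : ℕ} (v w : Esp m) : ℝ := ∑ i, (v.1 i * w.2 i - v.2 i * w.1 i)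

/-- `f` is a symplectic embedding on the set `A`. -/
def IsSymplecticEmbeddingOn {m : ℕ} (f : Esp m → Esp m) (A : Set (Esp m)) : Prop :=
  Set.InjOn f A ∧ ∀ p ∈ A, DifferentiableAt ℝ f p ∧
    ∀ v w, omega0 (fderiv ℝ f p v) (fderiv ℝ f p w) = omega0 v w

/-- The open round ball in `ℝ^{2m}` of capacity `a` (radius `√(a/π)`), centered at `0`. -/
def openBallCap (m : ℕ) (a : ℝ) : Set (Esp m) :=
  {p | Real.pi * (∑ i, ((p.1 i)^2 + (p.2 i)^2)) < a}

/-- The closed round ball in `ℝ^{2m}` of capacity `a` (radius `√(a/π)`), centered at `0`. -/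
def closedBallCap (m : ℕ) (a : ℝ) : Set (Esp m) :=
  {p | Real.pi * (∑ i, ((p.1 i)^2 + (p.2 i)^2)) ≤ a}

/-- The trapezoid `T^{2n+2}(a) = {(x,u,v) : 0 ≤ u ≤ a, 0 ≤ v ≤ 1, x ∈ B^{2n}(a-u)}`,
where `u = p.1 (Fin.last n)` and `v = p.2 (Fin.last n)`. -/
def trapezoid (n : ℕ) (a : ℝ) : Set (Esp (n+1)) :=
  {p | p.1 (Fin.last n) ∈ Icc (0:ℝ) a ∧ p.2 (Fin.last n) ∈ Icc (0:ℝ) 1 ∧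
       Real.pi * (∑ i : Fin n, ((p.1 i.castSucc)^2 + (p.2 i.castSucc)^2))
         ≤ a - p.1 (Fin.last n)}


open Filter Topology

/-! ### Area-preserving maps of the plane -/

/-- The area form `du ∧ dv` on `ℝ²`. -/
def planeArea (v w : ℝ × ℝ) : ℝ := v.1 * w.2 - v.2 * w.1

/-- The linear map of `ℝ × ℝ` with matrix `!![p, q; s, t]`. Coordinates in `ℝ × ℝ` make the
derivatives of explicit plane maps readable entrywise. -/
def lin2 (p q s t : ℝ) : ℝ × ℝ →L[ℝ] ℝ × ℝ :=
  (p • ContinuousLinearMap.fst ℝ ℝ ℝ + q • ContinuousLinearMap.snd ℝ ℝ ℝ).prod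
    (s • ContinuousLinearMap.fst ℝ ℝ ℝ + t • ContinuousLinearMap.snd ℝ ℝ ℝ)

@[simp] lemma lin2_apply (p q s t : ℝ) (v : ℝ × ℝ) :
    lin2 p q s t v = (p * v.1 + q * v.2, s * v.1 + t * v.2) := by
  simp [lin2]

lemma planeArea_lin2 (p q s t : ℝ) (v w : ℝ × ℝ) :
    planeArea (lin2 p q s t v) (lin2 p q s t w) = (p * t - q * s) * planeArea v w := by
  simp only [planeArea, lin2_apply]; ring

/-- `lin2` as an equivalence when its determinant is nonzero, with the adjugate formula as inverse. -/
def lin2Equiv (p q s t : ℝ) (h : p * t - q * s ≠ 0) : (ℝ × ℝ) ≃L[ℝ] (ℝ × ℝ) :=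
  ContinuousLinearEquiv.equivOfInverse (lin2 p q s t)
    (lin2 (t * (p * t - q * s)⁻¹) (-q * (p * t - q * s)⁻¹) (-s * (p * t - q * s)⁻¹)
      (p * (p * t - q * s)⁻¹))
    (by
      intro v
      have hi := mul_inv_cancel₀ h
      ext <;> simp only [lin2_apply]
      · linear_combination v.1 * hi
      · linear_combination v.2 * hi)
    (by
      intro v
      have hi := mul_inv_cancel₀ h
      ext <;> simp only [lin2_apply]
      · linear_combination v.1 * hi
      · linear_combination v.2 * hi)

lemma eq_lin2 (D : ℝ × ℝ →L[ℝ] ℝ × ℝ) :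
    D = lin2 (D (1, 0)).1 (D (0, 1)).1 (D (1, 0)).2 (D (0, 1)).2 := by
  ext <;> simp

/-- The lower left entry of the derivative is left unspecified: for a map whose first component
does not depend on the second variable it does not enter the determinant. -/
lemma HasFDerivAt.exists_lin2 {f : ℝ × ℝ → ℝ × ℝ} {D : ℝ × ℝ →L[ℝ] ℝ × ℝ} {w : ℝ × ℝ}
    (h : HasFDerivAt f D w) {p q t : ℝ} (hp : (D (1, 0)).1 = p) (hq : (D (0, 1)).1 = q)
    (ht : (D (0, 1)).2 = t) : ∃ s, HasFDerivAt f (lin2 p q s t) w := by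
  subst hp hq ht
  exact ⟨_, eq_lin2 D ▸ h⟩

/-- If `Z` is injective on `Ω` and `Z`, `S` have the same nonzero Jacobian determinant at `w`, then
`S ∘ Z⁻¹` has an area-preserving derivative at `Z w`. The global inverse `invFunOn` agrees near
`Z w` with the local inverse given by the inverse function theorem. -/
lemma exists_areaPreserving_deriv {Z S : ℝ × ℝ → ℝ × ℝ} {Ω : Set (ℝ × ℝ)} (hΩ : IsOpen Ω)
    (hZ : InjOn Z Ω) {w : ℝ × ℝ} (hw : w ∈ Ω) {p q s t p' q' s' t' : ℝ}
    (hA : HasStrictFDerivAt Z (lin2 p q s t) w) (hB : HasFDerivAt S (lin2 p' q' s' t') w)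
    (hdet : p' * t' - q' * s' = p * t - q * s) (h0 : p * t - q * s ≠ 0) :
    ∃ g' : ℝ × ℝ →L[ℝ] ℝ × ℝ,
      HasFDerivAt (fun z => S (Function.invFunOn Z Ω z)) g' (Z w) ∧
      ∀ v v', planeArea (g' v) (g' v') = planeArea v v' := by
  set e := lin2Equiv p q s t h0 with he
  have hA' : HasStrictFDerivAt Z (e : ℝ × ℝ →L[ℝ] ℝ × ℝ) w := hA
  have hinv := hA'.to_localInverse
  have hval : hA'.localInverse Z e w (Z w) = w := hA'.localInverse_apply_image
  have hev : (fun z => Function.invFunOn Z Ω z) =ᶠ[𝓝 (Z w)] hA'.localInverse Z e w := by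
    have h1 : ∀ᶠ z in 𝓝 (Z w), hA'.localInverse Z e w z ∈ Ω := by
      apply hinv.hasFDerivAt.continuousAt.eventually
      rw [hval]; exact hΩ.mem_nhds hw
    filter_upwards [h1, hA'.eventually_right_inverse] with z hz1 hz2
    have hex : ∃ x ∈ Ω, Z x = z := ⟨_, hz1, hz2⟩
    exact hZ (Function.invFunOn_mem hex) hz1 ((Function.invFunOn_eq hex).trans hz2.symm)
  have hi : HasFDerivAt (fun z => Function.invFunOn Z Ω z)
      (e.symm : ℝ × ℝ →L[ℝ] ℝ × ℝ) (Z w) := hinv.hasFDerivAt.congr_of_eventuallyEq hev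
  have hiw : Function.invFunOn Z Ω (Z w) = w := hev.eq_of_nhds.trans hval
  refine ⟨(lin2 p' q' s' t').comp (e.symm : ℝ × ℝ →L[ℝ] ℝ × ℝ), ?_, ?_⟩
  · exact HasFDerivAt.comp (Z w) (by rw [hiw]; exact hB) hi
  · intro v v'
    have key : ∀ v, lin2 p q s t (e.symm v) = v := fun v => e.apply_symm_apply v
    conv_rhs => rw [← key v, ← key v']
    simp only [ContinuousLinearMap.comp_apply, ContinuousLinearEquiv.coe_coe]
    rw [planeArea_lin2, planeArea_lin2, hdet]

/-! ### The two parametrisations -/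

/-- Powers `≥ 2` of the positive part are differentiable, also at `0`. -/
lemma hasDerivAt_posPart_pow (n : ℕ) (x : ℝ) :
    HasDerivAt (fun x : ℝ => (max x 0) ^ (n + 2)) ((n + 2 : ℕ) * (max x 0) ^ (n + 1)) x := by
  rcases lt_trichotomy x 0 with h | h | h
  · have : (fun x : ℝ => (max x 0) ^ (n + 2)) =ᶠ[𝓝 x] fun _ => 0 := by
      filter_upwards [gt_mem_nhds h] with y hy
      simp [max_eq_right hy.le]
    rw [max_eq_right h.le]
    simpa using (hasDerivAt_const x (0 : ℝ)).congr_of_eventuallyEq this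
  · subst h
    rw [hasDerivAt_iff_tendsto_slope_zero]
    have hc : Continuous fun t : ℝ => (max t 0) ^ (n + 1) := by fun_prop
    have h2 : Tendsto (fun t : ℝ => (max t 0) ^ (n + 1)) (𝓝[≠] 0)
        (𝓝 (((n + 2 : ℕ) : ℝ) * (max 0 0) ^ (n + 1))) := by
      simpa using (hc.tendsto 0).mono_left nhdsWithin_le_nhds
    refine h2.congr' ?_
    filter_upwards [self_mem_nhdsWithin] with t ht
    have ht' : t ≠ 0 := ht
    rcases le_total t 0 with h | h
    · simp [max_eq_right h]
    · simp only [zero_add, max_eq_left h, max_self, smul_eq_mul]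
      field_simp
      ring
  · have : (fun x : ℝ => (max x 0) ^ (n + 2)) =ᶠ[𝓝 x] fun x => x ^ (n + 2) := by
      filter_upwards [lt_mem_nhds h] with y hy
      simp [max_eq_left hy.le]
    rw [max_eq_left h.le]
    simpa using (hasDerivAt_pow (n + 2) x).congr_of_eventuallyEq this

/-- The abscissa of the focus of the curve `m`: zero for `m ≥ 0`, and moving to the left as `m`
decreases below `0`. The cube makes it twice differentiable, so that `shift'` can be
differentiated in `straight`. -/
def shift (M m : ℝ) : ℝ := -M * (max (-m) 0) ^ 3
/-- The derivative of `shift`. -/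
def shift' (M m : ℝ) : ℝ := 3 * M * (max (-m) 0) ^ 2

lemma hasDerivAt_shift (M m : ℝ) : HasDerivAt (shift M) (shift' M m) m := by
  have := ((hasDerivAt_posPart_pow 1 (-m)).comp m (hasDerivAt_neg m)).const_mul (-M)
  refine this.congr_deriv ?_
  simp [shift']; ring

lemma hasDerivAt_shift' (M m : ℝ) :
    HasDerivAt (shift' M) (-6 * M * max (-m) 0) m := by
  have := ((hasDerivAt_posPart_pow 0 (-m)).comp m (hasDerivAt_neg m)).const_mul (3 * M)
  refine this.congr_deriv ?_
  simp; ring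

lemma hasStrictDerivAt_shift (M m : ℝ) : HasStrictDerivAt (shift M) (shift' M m) m := by
  apply hasStrictDerivAt_of_hasDerivAt_of_continuousAt
  · exact Eventually.of_forall (hasDerivAt_shift M)
  · exact (hasDerivAt_shift' M m).continuousAt

/-- The distance from the focus to the point with parameters `p = (m, t)`. -/
def rad (b : ℝ) (p : ℝ × ℝ) : ℝ := √((p.1 + b * (1 + p.2 ^ 2)) / Real.pi)

/-- The family of curves: `t ↦ fol b M (m, t)` is the curve `m`. The fractions are `cos θ` and
`sin θ` for `t = tan (θ / 2)`, so the parameter `t ∈ ℝ` misses only the leftward direction, in which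
the curve goes to infinity. -/
def fol (b M : ℝ) (p : ℝ × ℝ) : ℝ × ℝ :=
  (shift M p.1 + rad b p * ((1 - p.2 ^ 2) / (1 + p.2 ^ 2)), rad b p * (2 * p.2 / (1 + p.2 ^ 2)))

/-- The target parametrisation: each curve `m` becomes a vertical segment, with the second
coordinate chosen so that `straight` has the same Jacobian determinant as `fol`. The translation by
`e` keeps the image in the right half plane. -/
def straight (b M L e : ℝ) (p : ℝ × ℝ) : ℝ × ℝ :=
  (p.1 + L * shift M p.1 + e,
    1 / 2 + (Real.arctan p.2 / Real.pi + shift' M p.1 * (fol b M p).2) / (1 + L * shift' M p.1))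

lemma shift'_nonneg {M : ℝ} (hM : 0 ≤ M) (m : ℝ) : 0 ≤ shift' M m := by
  unfold shift'; positivity

lemma shift_nonpos {M : ℝ} (hM : 0 ≤ M) (m : ℝ) : shift M m ≤ 0 := by
  have : 0 ≤ M * (max (-m) 0) ^ 3 := by positivity
  unfold shift; linarith

lemma shift_mono {M : ℝ} (hM : 0 ≤ M) : Monotone (shift M) := by
  intro x y h
  have : max (-y) 0 ≤ max (-x) 0 := max_le_max (by linarith) le_rfl
  have h3 : (max (-y) 0) ^ 3 ≤ (max (-x) 0) ^ 3 := pow_le_pow_left₀ (le_max_right _ _) this 3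
  unfold shift; nlinarith

lemma shift_of_nonneg (M : ℝ) {m : ℝ} (hm : 0 ≤ m) : shift M m = 0 := by
  simp [shift, max_eq_right (neg_nonpos.2 hm)]

lemma shift'_of_nonneg (M : ℝ) {m : ℝ} (hm : 0 ≤ m) : shift' M m = 0 := by
  simp [shift', max_eq_right (neg_nonpos.2 hm)]

/-! ### Derivatives and Jacobian determinants -/

section
variable {b M : ℝ} {p : ℝ × ℝ}

lemma rad_arg_pos (hb : 0 < b) (hp : -b < p.1) : 0 < p.1 + b * (1 + p.2 ^ 2) := by
  nlinarith [mul_nonneg hb.le (sq_nonneg p.2)]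

lemma rad_pos (hb : 0 < b) (hp : -b < p.1) : 0 < rad b p :=
  Real.sqrt_pos.2 (div_pos (rad_arg_pos hb hp) Real.pi_pos)

lemma rad_sq (hb : 0 < b) (hp : -b < p.1) :
    Real.pi * rad b p ^ 2 = p.1 + b * (1 + p.2 ^ 2) := by
  rw [rad, Real.sq_sqrt (div_pos (rad_arg_pos hb hp) Real.pi_pos).le]
  field_simp

lemma rad_deriv (hb : 0 < b) (hp : -b < p.1) :
    HasStrictFDerivAt (rad b) ((1 / (2 * Real.pi * rad b p)) • ContinuousLinearMap.fst ℝ ℝ ℝ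
      + (b * p.2 / (Real.pi * rad b p)) • ContinuousLinearMap.snd ℝ ℝ ℝ) p := by
  have h0 := (div_pos (rad_arg_pos hb hp) Real.pi_pos).ne'
  have hr := (rad_pos hb hp).ne'
  have h1 : HasStrictFDerivAt (fun p : ℝ × ℝ => p.1) (ContinuousLinearMap.fst ℝ ℝ ℝ) p :=
    hasStrictFDerivAt_fst
  have h2 : HasStrictFDerivAt (fun p : ℝ × ℝ => p.2) (ContinuousLinearMap.snd ℝ ℝ ℝ) p :=
    hasStrictFDerivAt_snd
  have := (Real.hasStrictDerivAt_sqrt h0).comp_hasStrictFDerivAt p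
    ((h1.add (((h2.pow 2).const_add 1).const_mul b)).mul_const (Real.pi⁻¹))
  refine HasStrictFDerivAt.congr_fderiv this ?_
  change (1 / (2 * rad b p)) • _ = _
  ext <;> simp <;> field_simp

/-- The partial derivative `∂y/∂t` of the second coordinate `y` of `fol` (see `fol_snd_deriv`). -/
def ySlope (b : ℝ) (p : ℝ × ℝ) : ℝ :=
  2 * (b + p.1 + (b - p.1) * p.2 ^ 2) / (Real.pi * rad b p * (1 + p.2 ^ 2) ^ 2)

lemma fol_snd_deriv (hb : 0 < b) (hp : -b < p.1) :
    HasStrictFDerivAt (fun p => (fol b M p).2)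
      ((1 / (2 * Real.pi * rad b p) * (2 * p.2 / (1 + p.2 ^ 2))) • ContinuousLinearMap.fst ℝ ℝ ℝ
      + ySlope b p • ContinuousLinearMap.snd ℝ ℝ ℝ) p := by
  have hr := (rad_pos hb hp).ne'
  have hsq := rad_sq hb hp
  have h3 : (1 + p.2 ^ 2) ≠ 0 := by positivity
  have hS : HasStrictDerivAt (fun t : ℝ => 2 * t / (1 + t ^ 2))
      (2 * (1 - p.2 ^ 2) / (1 + p.2 ^ 2) ^ 2) p.2 := by
    have := ((hasStrictDerivAt_id p.2).const_mul 2).div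
      (((hasStrictDerivAt_id p.2).pow 2).const_add 1) h3
    refine this.congr_deriv ?_
    simp; ring
  have := (rad_deriv hb hp).mul (hS.comp_hasStrictFDerivAt p hasStrictFDerivAt_snd)
  refine HasStrictFDerivAt.congr_fderiv this ?_
  ext
  · simp; ring
  · simp [ySlope]
    field_simp
    linear_combination (1 - p.2 ^ 2) * hsq

lemma fol_fst_deriv (hb : 0 < b) (hp : -b < p.1) :
    HasStrictFDerivAt (fun p => (fol b M p).1)
      ((shift' M p.1 + 1 / (2 * Real.pi * rad b p) * ((1 - p.2 ^ 2) / (1 + p.2 ^ 2))) •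
        ContinuousLinearMap.fst ℝ ℝ ℝ
      + (b * p.2 / (Real.pi * rad b p) * ((1 - p.2 ^ 2) / (1 + p.2 ^ 2)) -
          rad b p * (4 * p.2 / (1 + p.2 ^ 2) ^ 2)) • ContinuousLinearMap.snd ℝ ℝ ℝ) p := by
  have h3 : (1 + p.2 ^ 2) ≠ 0 := by positivity
  have hC : HasStrictDerivAt (fun t : ℝ => (1 - t ^ 2) / (1 + t ^ 2))
      (- (4 * p.2 / (1 + p.2 ^ 2) ^ 2)) p.2 := by
    have := (((hasStrictDerivAt_id p.2).pow 2).const_sub 1).div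
      (((hasStrictDerivAt_id p.2).pow 2).const_add 1) h3
    refine this.congr_deriv ?_
    simp; ring
  have := ((hasStrictDerivAt_shift M p.1).comp_hasStrictFDerivAt p hasStrictFDerivAt_fst).add
    ((rad_deriv hb hp).mul (hC.comp_hasStrictFDerivAt p hasStrictFDerivAt_snd))
  refine HasStrictFDerivAt.congr_fderiv this ?_
  ext
  · simp; ring
  · simp; ring

lemma fol_deriv (hb : 0 < b) (hp : -b < p.1) :
    HasStrictFDerivAt (fol b M) (lin2
      (shift' M p.1 + 1 / (2 * Real.pi * rad b p) * ((1 - p.2 ^ 2) / (1 + p.2 ^ 2)))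
      (b * p.2 / (Real.pi * rad b p) * ((1 - p.2 ^ 2) / (1 + p.2 ^ 2)) -
          rad b p * (4 * p.2 / (1 + p.2 ^ 2) ^ 2))
      (1 / (2 * Real.pi * rad b p) * (2 * p.2 / (1 + p.2 ^ 2)))
      (ySlope b p)) p :=
  (fol_fst_deriv hb hp).prodMk (fol_snd_deriv (M := M) hb hp)

/-- The Jacobian determinant of `fol`. Moving the focus adds `shift' · ∂y/∂t` to the determinant
of polar coordinates, in which `r dr dθ = dm · dt / (π (1 + t²))`. -/
lemma fol_det (hb : 0 < b) (hp : -b < p.1) :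
    (shift' M p.1 + 1 / (2 * Real.pi * rad b p) * ((1 - p.2 ^ 2) / (1 + p.2 ^ 2))) * ySlope b p
    - (b * p.2 / (Real.pi * rad b p) * ((1 - p.2 ^ 2) / (1 + p.2 ^ 2)) -
          rad b p * (4 * p.2 / (1 + p.2 ^ 2) ^ 2)) *
      (1 / (2 * Real.pi * rad b p) * (2 * p.2 / (1 + p.2 ^ 2))) =
    1 / (Real.pi * (1 + p.2 ^ 2)) + shift' M p.1 * ySlope b p := by
  have hr := (rad_pos hb hp).ne'
  have hsq := rad_sq hb hp
  have h3 : (1 + p.2 ^ 2) ≠ 0 := by positivity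
  unfold ySlope
  field_simp
  have : p.1 = Real.pi * rad b p ^ 2 - b * (1 + p.2 ^ 2) := by linarith
  rw [this]
  ring

/-- For `m ≤ 0` the curves have increasing height; for `m ≥ 0` the `shift'` term vanishes. -/
lemma fol_det_pos (hb : 0 < b) (hM : 0 ≤ M) (hp : -b < p.1) :
    0 < 1 / (Real.pi * (1 + p.2 ^ 2)) + shift' M p.1 * ySlope b p := by
  have h1 : 0 < 1 / (Real.pi * (1 + p.2 ^ 2)) := by have := Real.pi_pos; positivity
  rcases le_total 0 p.1 with h | h
  · simpa [shift'_of_nonneg M h] using h1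
  · have hr := rad_pos hb hp
    have h4 : 0 ≤ ySlope b p := by
      have := mul_nonneg (sub_nonneg.2 (h.trans hb.le)) (sq_nonneg p.2)
      unfold ySlope
      have := Real.pi_pos
      apply div_nonneg
      · linarith
      · positivity
    have := mul_nonneg (shift'_nonneg hM p.1) h4
    linarith

lemma straight_deriv {L e : ℝ} (hb : 0 < b) (hM : 0 ≤ M) (hL : 0 ≤ L) (hp : -b < p.1) :
    ∃ d : ℝ, HasFDerivAt (straight b M L e) (lin2 (1 + L * shift' M p.1) 0 d
      ((1 / (Real.pi * (1 + p.2 ^ 2)) + shift' M p.1 * ySlope b p) / (1 + L * shift' M p.1))) p := by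
  have hD : 1 + L * shift' M p.1 ≠ 0 := by
    have := mul_nonneg hL (shift'_nonneg hM p.1); positivity
  have h1 : HasFDerivAt (fun p : ℝ × ℝ => p.1) (ContinuousLinearMap.fst ℝ ℝ ℝ) p :=
    hasFDerivAt_fst
  have h2 : HasFDerivAt (fun p : ℝ × ℝ => p.2) (ContinuousLinearMap.snd ℝ ℝ ℝ) p :=
    hasFDerivAt_snd
  have hq := (hasDerivAt_shift M p.1).comp_hasFDerivAt p h1
  have hq' := (hasDerivAt_shift' M p.1).comp_hasFDerivAt p h1
  have hc := ((h1.add (hq.const_mul L)).add_const e)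
  have hat := ((Real.hasDerivAt_arctan p.2).comp_hasFDerivAt p h2).mul_const (Real.pi⁻¹)
  have hnum := hat.add (hq'.mul (fol_snd_deriv (M := M) hb hp).hasFDerivAt)
  have hden := (hasDerivAt_inv hD).comp_hasFDerivAt p ((hq'.const_mul L).const_add 1)
  have htau := (hnum.mul hden).const_add (1 / 2)
  have hboth := hc.prodMk htau
  refine hboth.exists_lin2 ?_ ?_ ?_
  · simp
  · simp
  · simp; field_simp

/-! ### Injectivity -/

/-- With a common focus, `fol` is injective because polar coordinates are. -/
lemma fol_eq_of_shift_eq {p₁ p₂ : ℝ × ℝ} (hb : 0 < b) (h₁ : -b < p₁.1) (h₂ : -b < p₂.1)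
    (h : fol b M p₁ = fol b M p₂) (hs : shift M p₁.1 = shift M p₂.1) : p₁ = p₂ := by
  have hX : rad b p₁ * ((1 - p₁.2 ^ 2) / (1 + p₁.2 ^ 2)) =
      rad b p₂ * ((1 - p₂.2 ^ 2) / (1 + p₂.2 ^ 2)) := by
    have := congrArg Prod.fst h
    simp only [fol, hs] at this
    linarith
  have hY : rad b p₁ * (2 * p₁.2 / (1 + p₁.2 ^ 2)) =
      rad b p₂ * (2 * p₂.2 / (1 + p₂.2 ^ 2)) := congrArg Prod.snd h
  have r₁ := rad_pos hb h₁
  have r₂ := rad_pos hb h₂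
  have key : ∀ t : ℝ, ((1 - t ^ 2) / (1 + t ^ 2)) ^ 2 + (2 * t / (1 + t ^ 2)) ^ 2 = 1 := by
    intro t
    have : 1 + t ^ 2 ≠ 0 := by positivity
    field_simp
    ring
  have hr : rad b p₁ = rad b p₂ := by
    have : rad b p₁ ^ 2 = rad b p₂ ^ 2 := by
      have e₁ := congrArg (rad b p₁ ^ 2 * ·) (key p₁.2)
      have e₂ := congrArg (rad b p₂ ^ 2 * ·) (key p₂.2)
      simp only [mul_add, ← mul_pow, mul_one] at e₁ e₂
      rw [← e₁, ← e₂, hX, hY]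
    exact (pow_left_inj₀ r₁.le r₂.le two_ne_zero).1 this
  rw [hr] at hX hY
  have hC := mul_left_cancel₀ r₂.ne' hX
  have hS := mul_left_cancel₀ r₂.ne' hY
  have e₁ : 1 + p₁.2 ^ 2 ≠ 0 := by positivity
  have e₂ : 1 + p₂.2 ^ 2 ≠ 0 := by positivity
  have hT : p₁.2 ^ 2 = p₂.2 ^ 2 := by
    rw [div_eq_div_iff e₁ e₂] at hC
    linarith
  have ht : p₁.2 = p₂.2 := by
    rw [hT, div_left_inj' e₂] at hS
    linarith
  have q₁ := rad_sq hb h₁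
  have q₂ := rad_sq hb h₂
  rw [hr, ht] at q₁
  exact Prod.ext (by linarith) ht

/-- Curves with distinct foci do not meet. If the curves `m₁ < m₂` met at height `y`, then, the
first focus being further left, `t₁ < t₂` (up to sign). On the line of height `k = |y|`,
`-m = (1 + t²) (b - (π k² / 4) (1 + 1 / t²))`, which increases with `t`; hence `m₂ ≤ m₁`. -/
lemma fol_shift_eq {p₁ p₂ : ℝ × ℝ} (hb : 0 < b) (hM : 0 ≤ M) (h₁ : -b < p₁.1) (h₂ : -b < p₂.1)
    (h : fol b M p₁ = fol b M p₂) : shift M p₁.1 = shift M p₂.1 := by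
  wlog hle : p₁.1 ≤ p₂.1 generalizing p₁ p₂
  · exact (this h₂ h₁ h.symm (le_of_not_ge hle)).symm
  refine le_antisymm (shift_mono hM hle) (not_lt.1 fun hlt => ?_)
  have hm : p₁.1 < p₂.1 := lt_of_le_of_ne hle fun he => by rw [he] at hlt; exact lt_irrefl _ hlt
  have hm0 : p₁.1 < 0 := by
    by_contra hc
    rw [shift_of_nonneg M (not_lt.1 hc), shift_of_nonneg M ((not_lt.1 hc).trans hle)] at hlt
    exact lt_irrefl _ hlt
  have r₁ := rad_pos hb h₁
  have r₂ := rad_pos hb h₂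
  have q₁ := rad_sq hb h₁
  have q₂ := rad_sq hb h₂
  have e₁ : 0 < 1 + p₁.2 ^ 2 := by positivity
  have e₂ : 0 < 1 + p₂.2 ^ 2 := by positivity
  have hX : rad b p₁ * ((1 - p₁.2 ^ 2) / (1 + p₁.2 ^ 2)) >
      rad b p₂ * ((1 - p₂.2 ^ 2) / (1 + p₂.2 ^ 2)) := by
    have := congrArg Prod.fst h
    simp only [fol] at this
    linarith
  have hY : rad b p₁ * (2 * p₁.2 / (1 + p₁.2 ^ 2)) =
      rad b p₂ * (2 * p₂.2 / (1 + p₂.2 ^ 2)) := congrArg Prod.snd h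
  -- At height zero the point is the vertex of both curves; otherwise both parameters are nonzero,
  -- and the symmetry `(y, t) ↦ (-y, -t)` is removed by passing to absolute values.
  by_cases ht : p₁.2 = 0
  · have ht₂ : p₂.2 = 0 := by
      rw [ht] at hY
      have h0 : rad b p₂ * (2 * p₂.2 / (1 + p₂.2 ^ 2)) = 0 := by rw [← hY]; simp
      have := (mul_eq_zero.1 h0).resolve_left r₂.ne'
      have := (div_eq_zero_iff.1 this).resolve_right e₂.ne'
      linarith
    have hle' : rad b p₁ ≤ rad b p₂ := by
      unfold rad
      rw [ht, ht₂]
      gcongr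
    rw [ht, ht₂] at hX
    norm_num at hX
    linarith
  · set y := rad b p₁ * (2 * p₁.2 / (1 + p₁.2 ^ 2)) with hy
    have hy0 : y ≠ 0 := by
      have := r₁.ne'
      have := e₁.ne'
      rw [hy]; positivity
    have ht₂ : p₂.2 ≠ 0 := by
      intro h0
      rw [h0] at hY
      simp at hY
      exact hy0 hY
    have a₁ := abs_pos.2 ht
    have a₂ := abs_pos.2 ht₂
    have ay := abs_pos.2 hy0
    have Y₁ : |y| = rad b p₁ * (2 * |p₁.2| / (1 + p₁.2 ^ 2)) := by
      rw [hy, abs_mul, abs_div, abs_mul, abs_of_pos r₁, abs_of_pos e₁]; norm_num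
    have Y₂ : |y| = rad b p₂ * (2 * |p₂.2| / (1 + p₂.2 ^ 2)) := by
      rw [hY, abs_mul, abs_div, abs_mul, abs_of_pos r₂, abs_of_pos e₂]; norm_num
    -- From here on `t₁ = |p₁.2|`, `t₂ = |p₂.2|` and `k = |y|`.
    rw [← sq_abs p₁.2] at *
    rw [← sq_abs p₂.2] at *
    generalize |p₁.2| = t₁ at *
    generalize |p₂.2| = t₂ at *
    generalize |y| = k at *
    have R₁ : rad b p₁ = k * (1 + t₁ ^ 2) / (2 * t₁) := by rw [Y₁]; field_simp
    have R₂ : rad b p₂ = k * (1 + t₂ ^ 2) / (2 * t₂) := by rw [Y₂]; field_simp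
    have hlt' : t₁ < t₂ := by
      by_contra hc
      have hc := not_lt.1 hc
      have X₁ : rad b p₁ * ((1 - t₁ ^ 2) / (1 + t₁ ^ 2)) = k / 2 * (1 / t₁ - t₁) := by
        rw [R₁]; field_simp
      have X₂ : rad b p₂ * ((1 - t₂ ^ 2) / (1 + t₂ ^ 2)) = k / 2 * (1 / t₂ - t₂) := by
        rw [R₂]; field_simp
      rw [X₁, X₂] at hX
      have := lt_of_mul_lt_mul_left hX (by positivity)
      have := one_div_le_one_div_of_le a₂ hc
      linarith
    have M₁ : -p₁.1 = (1 + t₁ ^ 2) * (b - Real.pi * k ^ 2 / 4 * (1 + 1 / t₁ ^ 2)) := by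
      rw [R₁] at q₁
      have : p₁.1 = Real.pi * (k * (1 + t₁ ^ 2) / (2 * t₁)) ^ 2 - b * (1 + t₁ ^ 2) := by linarith
      rw [this]; field_simp; ring
    have M₂ : -p₂.1 = (1 + t₂ ^ 2) * (b - Real.pi * k ^ 2 / 4 * (1 + 1 / t₂ ^ 2)) := by
      rw [R₂] at q₂
      have : p₂.1 = Real.pi * (k * (1 + t₂ ^ 2) / (2 * t₂)) ^ 2 - b * (1 + t₂ ^ 2) := by linarith
      rw [this]; field_simp; ring
    have b₁ : 0 < b - Real.pi * k ^ 2 / 4 * (1 + 1 / t₁ ^ 2) :=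
      pos_of_mul_pos_right (by rw [← M₁]; linarith) e₁.le
    have hpi := Real.pi_pos
    have : -p₁.1 ≤ -p₂.1 := by
      rw [M₁, M₂]
      gcongr
    linarith

lemma fol_injOn (hb : 0 < b) (hM : 0 ≤ M) : InjOn (fol b M) {p | -b < p.1} :=
  fun _ h₁ _ h₂ h => fol_eq_of_shift_eq hb h₁ h₂ h (fol_shift_eq hb hM h₁ h₂ h)

/-- The first coordinate is strictly increasing in `m`, and on each curve the second one is
strictly increasing in `t`, its derivative being a positive multiple of the Jacobian determinant. -/
lemma straight_injOn {L e : ℝ} (hb : 0 < b) (hM : 0 ≤ M) (hL : 0 ≤ L) :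
    InjOn (straight b M L e) {p | -b < p.1} := by
  rintro ⟨m, t⟩ h₁ ⟨m', t'⟩ h₂ h
  have hm : m = m' := by
    have h1 : m + L * shift M m + e = m' + L * shift M m' + e := congrArg Prod.fst h
    have hmono : StrictMono fun m => m + L * shift M m :=
      strictMono_id.add_monotone ((shift_mono hM).const_mul hL)
    exact hmono.injective (by linarith)
  subst hm
  have hD : 1 + L * shift' M m ≠ 0 := by
    have := mul_nonneg hL (shift'_nonneg hM m); positivity
  have h2 : 1 / 2 + (Real.arctan t / Real.pi + shift' M m * (fol b M (m, t)).2) /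
      (1 + L * shift' M m) = 1 / 2 + (Real.arctan t' / Real.pi + shift' M m * (fol b M (m, t')).2) /
      (1 + L * shift' M m) := congrArg Prod.snd h
  have hmono : StrictMono fun t => Real.arctan t / Real.pi + shift' M m * (fol b M (m, t)).2 := by
    refine strictMono_of_hasDerivAt_pos (f' := fun t => 1 / (Real.pi * (1 + t ^ 2)) +
      shift' M m * ySlope b (m, t)) (fun t => ?_) (fun t => fol_det_pos (p := (m, t)) hb hM h₁)
    have h3 := (fol_snd_deriv (M := M) (p := (m, t)) hb h₁).hasFDerivAt.comp_hasDerivAt t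
      ((hasDerivAt_const t m).prodMk (hasDerivAt_id t))
    refine (((Real.hasDerivAt_arctan t).div_const Real.pi).add
      (h3.const_mul (shift' M m))).congr_deriv ?_
    simp
    field_simp
  have h4 := add_left_cancel h2
  rw [div_left_inj' hD] at h4
  rw [hmono.injective h4]

/-! ### Surjectivity onto a half plane -/

/-- Every point `(x, y)` with `x ≥ -R` lies on some curve. The condition on `M` puts the focus of
the limiting curve `m = -b` at abscissa at most `-R - 1`. -/
lemma fol_surj {R : ℝ} (hb : 0 < b) (hb1 : b ≤ 1) (hM : R + 1 ≤ M * b ^ 3) {z : ℝ × ℝ}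
    (hz : -R ≤ z.1) : ∃ p, -b < p.1 ∧ fol b M p = z := by
  obtain ⟨x, y⟩ := z
  have hz : -R ≤ x := hz
  have hpi := Real.pi_gt_three
  have hqb : shift M (-b) = -(M * b ^ 3) := by
    simp [shift, max_eq_left hb.le]
  have hqc : Continuous (shift M) :=
    continuous_iff_continuousAt.2 fun m => (hasDerivAt_shift M m).continuousAt
  set m₁ := Real.pi * (x ^ 2 + y ^ 2) + 1 with hm₁
  have hm₁0 : 0 ≤ m₁ := by positivity
  -- On the axis only vertices `t = 0` are used: the formula `t = y / (ρ + X)` has no value at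
  -- `y = 0`, `X ≤ 0`.
  by_cases hy : y = 0
  · set F : ℝ → ℝ := fun m => shift M m + √((m + b) / Real.pi) with hF
    have hFc : Continuous F := by fun_prop
    have hFb : F (-b) < x := by simp [hF, hqb]; linarith
    have hF1 : x ≤ F m₁ := by
      simp only [hF, shift_of_nonneg M hm₁0, zero_add]
      refine Real.le_sqrt_of_sq_le ?_
      rw [le_div_iff₀ (by positivity), hm₁, hy]
      nlinarith
    obtain ⟨m, hm, hmx⟩ := intermediate_value_Ioc (by linarith : -b ≤ m₁) hFc.continuousOn
      ⟨hFb, hF1⟩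
    refine ⟨(m, 0), hm.1, ?_⟩
    simp only [fol, rad]
    rw [← hmx, hy]
    simp [hF]
  -- For a given focus, `(X, y)` are coordinates about it and `ρ` is the distance to it, so
  -- `t = y / (ρ + X)` and `1 + t² = 2 ρ / (ρ + X)`; `F m = 0` says that the point is on the curve `m`.
  · set X : ℝ → ℝ := fun m => x - shift M m with hX
    set ρ : ℝ → ℝ := fun m => √(X m ^ 2 + y ^ 2) with hρ
    have hXc : Continuous X := by fun_prop
    have hρc : Continuous ρ := by fun_prop
    have hy2 : 0 < y ^ 2 := by positivity
    have hρsq : ∀ m, ρ m ^ 2 = X m ^ 2 + y ^ 2 := fun m => Real.sq_sqrt (by positivity)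
    have hρ0 : ∀ m, 0 < ρ m := fun m => Real.sqrt_pos.2 (by positivity)
    have hpos : ∀ m, 0 < ρ m + X m := by
      intro m
      have : |X m| < ρ m := abs_lt_of_sq_lt_sq (by rw [hρsq]; linarith) (hρ0 m).le
      linarith [neg_abs_le (X m)]
    set F : ℝ → ℝ := fun m => Real.pi * ρ m ^ 2 - 2 * b * ρ m / (ρ m + X m) - m with hF
    have hFc : Continuous F := by
      have : ∀ m, ρ m + X m ≠ 0 := fun m => (hpos m).ne'
      fun_prop (disch := assumption)
    have hFb : 0 < F (-b) := by
      have hX1 : 1 ≤ X (-b) := by simp [hX, hqb]; linarith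
      have h1 : 2 * b * ρ (-b) / (ρ (-b) + X (-b)) ≤ 2 * b := by
        rw [div_le_iff₀ (hpos _)]
        gcongr
        linarith
      have h2 : 1 ≤ ρ (-b) ^ 2 := by rw [hρsq]; nlinarith
      simp only [hF]
      nlinarith
    have hF1 : F m₁ ≤ 0 := by
      have hX1 : X m₁ = x := by simp [hX, shift_of_nonneg M hm₁0]
      have h1 : 0 ≤ 2 * b * ρ m₁ / (ρ m₁ + X m₁) := by
        have := hρ0 m₁
        have := hpos m₁
        positivity
      simp only [hF]
      rw [hρsq, hX1] at *
      linarith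
    obtain ⟨m, hm, hmx⟩ := intermediate_value_Ioc' (by linarith : -b ≤ m₁) hFc.continuousOn
      ⟨hF1, hFb⟩
    have hmx : Real.pi * ρ m ^ 2 - 2 * b * ρ m / (ρ m + X m) - m = 0 := hmx
    have hxm : x = shift M m + X m := by simp [hX]
    have hP := hpos m
    have hR := hρ0 m
    have hsq := hρsq m
    have hT : 1 + (y / (ρ m + X m)) ^ 2 = 2 * ρ m / (ρ m + X m) := by
      field_simp
      linear_combination (-1 : ℝ) * hsq
    have hr : rad b (m, y / (ρ m + X m)) = ρ m := by
      simp only [rad]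
      rw [hT]
      have : (m + b * (2 * ρ m / (ρ m + X m))) / Real.pi = ρ m ^ 2 := by
        rw [div_eq_iff (by positivity)]
        have : b * (2 * ρ m / (ρ m + X m)) = 2 * b * ρ m / (ρ m + X m) := by ring
        linarith
      rw [this, Real.sqrt_sq hR.le]
    refine ⟨(m, y / (ρ m + X m)), hm.1, ?_⟩
    simp only [fol, hr, hT]
    ext
    · have h1 : 1 - (y / (ρ m + X m)) ^ 2 = 2 - 2 * ρ m / (ρ m + X m) := by linarith
      simp only [h1]
      rw [hxm]
      field_simp
      ring
    · simp only
      field_simp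

/-! ### Estimates on the curves -/

/-- For `m ≥ 0` the curve `m` stays outside the disc of area `m`. -/
lemma fol_sq (hb : 0 < b) (hp : -b < p.1) (hp0 : 0 ≤ p.1) :
    p.1 ≤ Real.pi * ((fol b M p).1 ^ 2 + (fol b M p).2 ^ 2) := by
  have h : (fol b M p).1 ^ 2 + (fol b M p).2 ^ 2 = rad b p ^ 2 := by
    have : 1 + p.2 ^ 2 ≠ 0 := by positivity
    simp only [fol, shift_of_nonneg M hp0, zero_add]
    field_simp
    ring
  rw [h, rad_sq hb hp]
  have : 0 ≤ b * (1 + p.2 ^ 2) := by positivity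
  linarith

/-- The curves with `m ≤ 0` lie in the strip `|y| ≤ 2β`. -/
lemma fol_snd_bound {β : ℝ} (hβ : 0 < β) (hp : -(β ^ 2) < p.1) (hp0 : p.1 ≤ 0) :
    |(fol (β ^ 2) M p).2| ≤ 2 * β := by
  have hb : 0 < β ^ 2 := by positivity
  have hsq := rad_sq hb hp
  have hpi := Real.pi_gt_three
  have e : 0 < 1 + p.2 ^ 2 := by positivity
  refine abs_le_of_sq_le_sq ?_ (by positivity)
  simp only [fol]
  have h1 : rad (β ^ 2) p ^ 2 ≤ β ^ 2 * (1 + p.2 ^ 2) := by nlinarith [sq_nonneg (rad (β ^ 2) p)]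
  calc (rad (β ^ 2) p * (2 * p.2 / (1 + p.2 ^ 2))) ^ 2
      = rad (β ^ 2) p ^ 2 * (4 * p.2 ^ 2 / (1 + p.2 ^ 2) ^ 2) := by rw [mul_pow, div_pow]; ring
    _ ≤ β ^ 2 * (1 + p.2 ^ 2) * (4 * p.2 ^ 2 / (1 + p.2 ^ 2) ^ 2) := by gcongr
    _ = (2 * β) ^ 2 * (p.2 ^ 2 / (1 + p.2 ^ 2)) := by field_simp; ring
    _ ≤ (2 * β) ^ 2 * 1 := by
        gcongr
        rw [div_le_one e]
        linarith
    _ = _ := mul_one _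

/-- The curves with `m ≤ 0` reach at most distance `1` to the right of their focus. This bounds
`shift` from below on the curves through a given region. -/
lemma fol_fst_le (hb : 0 < b) (hb1 : b ≤ 1) (hp : -b < p.1) (hp0 : p.1 ≤ 0) :
    (fol b M p).1 ≤ shift M p.1 + 1 := by
  have hsq := rad_sq hb hp
  have hr := rad_pos hb hp
  have hpi := Real.pi_gt_three
  have e : 0 < 1 + p.2 ^ 2 := by positivity
  simp only [fol]
  rcases le_total 1 (p.2 ^ 2) with h | h
  · have : rad b p * ((1 - p.2 ^ 2) / (1 + p.2 ^ 2)) ≤ 0 :=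
      mul_nonpos_of_nonneg_of_nonpos hr.le (div_nonpos_of_nonpos_of_nonneg (by linarith) e.le)
    linarith
  · have h1 : rad b p ≤ 1 := by nlinarith
    have h2 : (1 - p.2 ^ 2) / (1 + p.2 ^ 2) ≤ 1 := by
      rw [div_le_one e]; linarith [sq_nonneg p.2]
    have h3 : 0 ≤ (1 - p.2 ^ 2) / (1 + p.2 ^ 2) := div_nonneg (by linarith) e.le
    nlinarith
end

/-! ### The planar map -/

/-- The planar map: the disc of area `a` embeds in the strip with the abscissa controlled by the
area of the concentric disc through the point. -/
lemma exists_planar (a ε : ℝ) (ha : 0 < a) (hε : 0 < ε) :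
    ∃ g : ℝ × ℝ → ℝ × ℝ,
      InjOn g {z | Real.pi * (z.1 ^ 2 + z.2 ^ 2) < a} ∧
      ∀ z : ℝ × ℝ, Real.pi * (z.1 ^ 2 + z.2 ^ 2) < a →
        (∃ g' : ℝ × ℝ →L[ℝ] ℝ × ℝ, HasFDerivAt g g' z ∧
          ∀ v w, planeArea (g' v) (g' w) = planeArea v w) ∧
        0 ≤ (g z).1 ∧ (g z).1 ≤ Real.pi * (z.1 ^ 2 + z.2 ^ 2) + ε ∧
        (g z).2 ∈ Icc (0 : ℝ) 1 := by
  have hpi := Real.pi_gt_three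
  set R := a + 1 with hR
  -- `b + L (R + 1) ≤ β + 4 β (R + 1) ≤ ε` makes the abscissa nonnegative on the curves with `m < 0`.
  obtain ⟨β, hβ, hβ1, hβε⟩ : ∃ β : ℝ, 0 < β ∧ β ≤ 1 ∧ β * (1 + 4 * (R + 1)) ≤ ε := by
    have hK : 0 < 1 + 4 * (R + 1) := by positivity
    refine ⟨min 1 (ε / (1 + 4 * (R + 1))), by positivity, min_le_left _ _, ?_⟩
    rw [← le_div_iff₀ hK]
    exact min_le_right _ _
  set b := β ^ 2 with hbdef
  have hb : 0 < b := by positivity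
  have hbβ : b ≤ β := by nlinarith
  have hb1 : b ≤ 1 := hbβ.trans hβ1
  set M := (R + 1) / b ^ 3 with hMdef
  have hM : 0 ≤ M := by positivity
  have hMb : R + 1 ≤ M * b ^ 3 := by rw [hMdef, div_mul_cancel₀ _ (by positivity)]
  set L := 4 * β with hLdef
  have hL : 0 ≤ L := by positivity
  set Ω : Set (ℝ × ℝ) := {p | -b < p.1} with hΩ
  have hΩo : IsOpen Ω := isOpen_lt continuous_const continuous_fst
  have hinj : InjOn (fol b M) Ω := fol_injOn hb hM
  have hz1 : ∀ z : ℝ × ℝ, Real.pi * (z.1 ^ 2 + z.2 ^ 2) < a → -R ≤ z.1 := by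
    intro z hz
    have : z.1 ^ 2 ≤ R ^ 2 := by nlinarith [sq_nonneg z.1, sq_nonneg z.2]
    exact (abs_le.1 (abs_le_of_sq_le_sq this (by positivity))).1
  have hex : ∀ z : ℝ × ℝ, Real.pi * (z.1 ^ 2 + z.2 ^ 2) < a → ∃ p ∈ Ω, fol b M p = z :=
    fun z hz => fol_surj hb hb1 hMb (hz1 z hz)
  refine ⟨fun z => straight b M L ε (Function.invFunOn (fol b M) Ω z), ?_, ?_⟩
  · intro z hz z' hz' h
    have := straight_injOn hb hM hL (Function.invFunOn_mem (hex z hz))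
      (Function.invFunOn_mem (hex z' hz')) h
    rw [← Function.invFunOn_eq (hex z hz), this, Function.invFunOn_eq (hex z' hz')]
  · intro z hz
    obtain ⟨p, hp, rfl⟩ := hex z hz
    have hp' : -b < p.1 := hp
    have hinv : Function.invFunOn (fol b M) Ω (fol b M p) = p :=
      hinj (Function.invFunOn_mem (hex _ hz)) hp (Function.invFunOn_eq (hex _ hz))
    have hD : 0 < 1 + L * shift' M p.1 := by
      have := mul_nonneg hL (shift'_nonneg hM p.1); positivity
    refine ⟨?_, ?_⟩
    · obtain ⟨d, hd⟩ := straight_deriv (e := ε) hb hM hL hp'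
      refine exists_areaPreserving_deriv hΩo hinj hp (fol_deriv hb hp') hd ?_ ?_
      · rw [fol_det hb hp', zero_mul, sub_zero, mul_div_cancel₀ _ hD.ne']
      · rw [fol_det hb hp']; exact (fol_det_pos hb hM hp').ne'
    · simp only [hinv]
      have hy : |Real.arctan p.2 / Real.pi| ≤ 1 / 2 := by
        rw [abs_div, abs_of_pos Real.pi_pos, div_le_iff₀ Real.pi_pos, abs_le]
        constructor <;> linarith [Real.neg_pi_div_two_lt_arctan p.2, Real.arctan_lt_pi_div_two p.2]
      have hτ : |Real.arctan p.2 / Real.pi + shift' M p.1 * (fol b M p).2| ≤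
          1 / 2 * (1 + L * shift' M p.1) := by
        refine (abs_add_le _ _).trans ?_
        have hs := shift'_nonneg hM p.1
        rw [abs_mul, abs_of_nonneg hs]
        rcases le_total 0 p.1 with h0 | h0
        · rw [shift'_of_nonneg M h0]; linarith
        -- `shift' · |y| ≤ 2 β · shift' = (L / 2) · shift'`
        · have := mul_le_mul_of_nonneg_left (fol_snd_bound (M := M) hβ hp' h0) hs
          rw [← hbdef] at this
          rw [hLdef]
          linarith
      have hτ' := abs_le.1 hτ
      refine ⟨?_, ?_, ?_, ?_⟩
      · rcases le_total 0 p.1 with h0 | h0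
        · simp only [straight, shift_of_nonneg M h0]; linarith
        · have h1 := fol_fst_le (M := M) hb hb1 hp' h0
          have h2 := hz1 _ hz
          have h3 : -(R + 1) ≤ shift M p.1 := by linarith
          have := mul_le_mul_of_nonneg_left h3 hL
          simp only [straight]
          rw [hLdef] at *
          nlinarith
      · have hs := mul_nonneg hL (neg_nonneg.2 (shift_nonpos hM p.1))
        simp only [straight]
        rcases le_total 0 p.1 with h0 | h0
        · have := fol_sq (M := M) hb hp' h0
          linarith
        · have : 0 ≤ Real.pi * ((fol b M p).1 ^ 2 + (fol b M p).2 ^ 2) := by positivity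
          linarith
      · have : -(1 / 2) ≤ (Real.arctan p.2 / Real.pi + shift' M p.1 * (fol b M p).2) /
            (1 + L * shift' M p.1) := by
          rw [le_div_iff₀ hD]; linarith
        simp only [straight]; linarith
      · have : (Real.arctan p.2 / Real.pi + shift' M p.1 * (fol b M p).2) /
            (1 + L * shift' M p.1) ≤ 1 / 2 := by
          rw [div_le_iff₀ hD]; linarith
        simp only [straight]; linarith

/-! ### The map in dimension `2n + 2` -/

/-- The `(u, v)`-coordinates of a point of `ℝ^{2n+2}`. -/
def lastPair (n : ℕ) : Esp (n + 1) →L[ℝ] ℝ × ℝ :=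
  ((ContinuousLinearMap.proj (Fin.last n)).comp (ContinuousLinearMap.fst ℝ _ _)).prod
    ((ContinuousLinearMap.proj (Fin.last n)).comp (ContinuousLinearMap.snd ℝ _ _))

/-- The inclusion of the `(u, v)`-plane in `ℝ^{2n+2}`. -/
def inLast (n : ℕ) : ℝ × ℝ →L[ℝ] Esp (n + 1) :=
  ((ContinuousLinearMap.single ℝ (fun _ : Fin (n + 1) => ℝ) (Fin.last n)).comp
      (ContinuousLinearMap.fst ℝ ℝ ℝ)).prod
    ((ContinuousLinearMap.single ℝ (fun _ : Fin (n + 1) => ℝ) (Fin.last n)).comp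
      (ContinuousLinearMap.snd ℝ ℝ ℝ))

@[simp] lemma lastPair_apply (n : ℕ) (v : Esp (n + 1)) :
    lastPair n v = (v.1 (Fin.last n), v.2 (Fin.last n)) := rfl

@[simp] lemma inLast_apply (n : ℕ) (v : ℝ × ℝ) :
    inLast n v = (Pi.single (Fin.last n) v.1, Pi.single (Fin.last n) v.2) := rfl

/-- (Lemma 3.5 (i) of the paper.)  For every `a > 0` and `ε > 0` the
open ball `B^{2n+2}(a)` embeds symplectically into the trapezoid `T^{2n+2}(a+ε)`. -/
theorem statement12 (n : ℕ) (a ε : ℝ) (ha : 0 < a) (hε : 0 < ε) :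
    ∃ f : Esp (n+1) → Esp (n+1),
      IsSymplecticEmbeddingOn f (openBallCap (n+1) a) ∧
      f '' openBallCap (n+1) a ⊆ trapezoid n (a + ε) := by
  obtain ⟨g, hginj, hg⟩ := exists_planar a ε ha hε
  set f : Esp (n + 1) → Esp (n + 1) := fun p => p + inLast n (g (lastPair n p) - lastPair n p)
    with hf
  have hball : ∀ p ∈ openBallCap (n + 1) a,
      Real.pi * ((lastPair n p).1 ^ 2 + (lastPair n p).2 ^ 2) +
        Real.pi * (∑ i : Fin n, ((p.1 i.castSucc) ^ 2 + (p.2 i.castSucc) ^ 2)) < a := by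
    intro p hp
    have hp : Real.pi * (∑ i, ((p.1 i) ^ 2 + (p.2 i) ^ 2)) < a := hp
    rw [Fin.sum_univ_castSucc] at hp
    simp only [lastPair_apply]
    linarith
  have hnn : ∀ p : Esp (n + 1),
      0 ≤ Real.pi * (∑ i : Fin n, ((p.1 i.castSucc) ^ 2 + (p.2 i.castSucc) ^ 2)) := by
    intro p
    have := Real.pi_pos
    positivity
  have hdisc : ∀ p ∈ openBallCap (n + 1) a,
      Real.pi * ((lastPair n p).1 ^ 2 + (lastPair n p).2 ^ 2) < a := by
    intro p hp
    linarith [hball p hp, hnn p]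
  have flast : ∀ p, lastPair n (f p) = g (lastPair n p) := by
    intro p; ext <;> simp [hf]
  have fcast₁ : ∀ p (i : Fin n), (f p).1 i.castSucc = p.1 i.castSucc := by
    intro p i; simp [hf]
  have fcast₂ : ∀ p (i : Fin n), (f p).2 i.castSucc = p.2 i.castSucc := by
    intro p i; simp [hf]
  refine ⟨f, ⟨?_, ?_⟩, ?_⟩
  · intro p hp p' hp' h
    have hl : lastPair n p = lastPair n p' :=
      hginj (hdisc p hp) (hdisc p' hp') (by rw [← flast, ← flast, h])
    simp only [hf, hl] at h
    exact add_right_cancel h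
  · intro p hp
    obtain ⟨⟨g', hg', harea⟩, -⟩ := hg _ (hdisc p hp)
    have hfd := (hasFDerivAt_id (𝕜 := ℝ) p).add ((inLast n).hasFDerivAt.comp p
      ((hg'.comp p (lastPair n).hasFDerivAt).sub (lastPair n).hasFDerivAt))
    have hfd : HasFDerivAt f _ p := hfd
    refine ⟨hfd.differentiableAt, fun v w => ?_⟩
    rw [hfd.fderiv]
    have := harea (lastPair n v) (lastPair n w)
    simp only [planeArea, lastPair_apply] at this
    simp only [omega0, Fin.sum_univ_castSucc]
    simp
    linarith
  · rintro _ ⟨p, hp, rfl⟩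
    obtain ⟨-, h0, h1, h2⟩ := hg _ (hdisc p hp)
    have hl₁ : (f p).1 (Fin.last n) = (g (lastPair n p)).1 := congrArg Prod.fst (flast p)
    have hl₂ : (f p).2 (Fin.last n) = (g (lastPair n p)).2 := congrArg Prod.snd (flast p)
    have hb := hball p hp
    have := hnn p
    simp only [trapezoid, mem_ofPred_eq, hl₁, hl₂, fcast₁, fcast₂]
    exact ⟨⟨h0, by linarith⟩, h2, by linarith⟩
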